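/- arXiv:2111.06842 — 5 statements merged into one kernel-verified Lean document; each statement's English description precedes it below -/
import Mathlib

section
/- Let A be an n×m real matrix with entries a_{ij} ∈ [0,1], let c ∈ ℝ^m with c ≥ 0 componentwise, and let β > 0. Suppose x* ∈ ℝ^m satisfies x* ≥ 0, A x* ≥ 1 componentwise, ⟨c, x*⟩ ≤ β, and x* is optimal, i.e. ⟨c, x*⟩ ≤ ⟨c, x⟩ for every x ∈ ℝ^m with x ≥ 0 and A x ≥ 1. Then x*_j = 0 for every index j with c_j > β. -/
open Finset

/-- Dropping the `j`-th coordinate of `x` and dividing the rest by `t` turns `⟨f, x⟩` into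
`(⟨f, x⟩ - f j * x j) / t`. -/
theorem sum_mul_update_zero_div {ι : Type*} [Fintype ι] [DecidableEq ι] (f x : ι → ℝ) (j : ι)
    (t : ℝ) :
    ∑ k, f k * (Function.update x j 0 k / t) = (∑ k, f k * x k - f j * x j) / t := by
  have hsplit (y : ι → ℝ) := add_sum_erase univ (fun k => f k * y k) (mem_univ j)
  have hrest : ∑ k ∈ univ.erase j, f k * Function.update x j 0 k =
      ∑ k ∈ univ.erase j, f k * x k :=
    sum_congr rfl fun k hk => by rw [Function.update_of_ne (ne_of_mem_erase hk)]
  simp_rw [← mul_div_assoc]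
  rw [← sum_div, ← hsplit x, ← hsplit (Function.update x j 0), hrest]
  simp

/-- Every pure covering LP `min {⟨c,x⟩ : Ax ≥ 1, x ≥ 0}` with costs `c ≥ 0` and matrix
entries in `[0,1]` has every optimal solution of cost at most `β` supported on columns
of cost at most `β`. -/
theorem stmt_0 (n m : ℕ) (A : Fin n → Fin m → ℝ) (c : Fin m → ℝ) (β : ℝ)
    (hA : ∀ i j, A i j ∈ Set.Icc (0 : ℝ) 1)
    (hc : ∀ j, 0 ≤ c j) (hβ : 0 < β)
    (xstar : Fin m → ℝ)
    (hx_nonneg : ∀ j, 0 ≤ xstar j)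
    (hx_feas : ∀ i, 1 ≤ ∑ j, A i j * xstar j)
    (hx_cost : ∑ j, c j * xstar j ≤ β)
    (hx_opt : ∀ x : Fin m → ℝ, (∀ j, 0 ≤ x j) → (∀ i, 1 ≤ ∑ j, A i j * x j) →
      ∑ j, c j * xstar j ≤ ∑ j, c j * x j) :
    ∀ j, β < c j → xstar j = 0 := by
  intro j hj
  by_contra hne
  have hpos : 0 < xstar j := lt_of_le_of_ne (hx_nonneg j) (Ne.symm hne)
  have hterm : c j * xstar j ≤ ∑ k, c k * xstar k :=
    single_le_sum (f := fun k => c k * xstar k)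
      (fun k _ => mul_nonneg (hc k) (hx_nonneg k)) (mem_univ j)
  have hlt : 0 < 1 - xstar j := by nlinarith
  have hopt := hx_opt (fun k => Function.update xstar j 0 k / (1 - xstar j))
    (fun k => by
      refine div_nonneg ?_ hlt.le
      by_cases hk : k = j
      · simp [hk]
      · simpa [hk] using hx_nonneg k)
    (fun i => by
      rw [sum_mul_update_zero_div, le_div_iff₀ hlt]
      nlinarith [hx_feas i, (hA i j).2])
  rw [sum_mul_update_zero_div, le_div_iff₀ hlt] at hopt
  nlinarith
end

section
/- Let c ∈ ℝ^m with c_j > 0 for all j, let β > 0, let m' := |{j : c_j ≤ β}| and assume m' ≥ 1, and define x⁰ ∈ ℝ^m by x⁰_j = β/(c_j·m') if c_j ≤ β and x⁰_j = 0 otherwise. Let x* ∈ ℝ^m with x* ≥ 0, ⟨c, x*⟩ ≤ β, and x*_j = 0 whenever c_j > β. Then KL_c(x* ‖ x⁰) ≤ β·(log m + 1). Moreover, if U is a finite nonempty set of size n and κ_u ∈ (0, β] for every u ∈ U, then β·log(Σ_{u∈U} κ_u / β) ≤ β·log n; consequently 2·KL_c(x* ‖ x⁰) + 2e·β·log(Σ_{u∈U}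 κ_u / β) ≤ 2β(log m + 1) + 2e·β·log n. -/
open Finset Real

/-- Weighted KL divergence `KL_c(x ‖ y) = ∑ⱼ cⱼ·(xⱼ·log(xⱼ/yⱼ) − xⱼ + yⱼ)`
(with the convention `0·log 0 = 0`, which is automatic for `Real.log`). -/
noncomputable def wKL {m : ℕ} (c x y : Fin m → ℝ) : ℝ :=
  ∑ j, c j * (x j * Real.log (x j / y j) - x j + y j)

/-- If `y` carries `c`-cost at most `β` and `x` has, on each coordinate of its support, a ratio
`x j / y j` of at most `M`, then `KL_c(x ‖ y) ≤ β (log M + 1)` whenever `⟨c, x⟩ ≤ β`. -/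
theorem wKL_le_of_ratio_le {m : ℕ} {c x y : Fin m → ℝ} {β M : ℝ} (hc : ∀ j, 0 < c j)
    (hx : ∀ j, 0 ≤ x j) (hM : 1 ≤ M) (hratio : ∀ j, 0 < x j → 0 < y j ∧ x j / y j ≤ M)
    (hcx : ∑ j, c j * x j ≤ β) (hcy : ∑ j, c j * y j ≤ β) :
    wKL c x y ≤ β * (Real.log M + 1) := by
  have term_le : ∀ j, c j * (x j * Real.log (x j / y j) - x j + y j) ≤
      c j * x j * Real.log M + c j * y j := by
    intro j
    have hlog : x j * Real.log (x j / y j) ≤ x j * Real.log M := by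
      rcases (hx j).eq_or_lt with h | h
      · simp [← h]
      · obtain ⟨hy, hle⟩ := hratio j h
        exact mul_le_mul_of_nonneg_left (Real.log_le_log (div_pos h hy) hle) h.le
    calc c j * (x j * Real.log (x j / y j) - x j + y j)
        ≤ c j * (x j * Real.log M + y j) :=
          mul_le_mul_of_nonneg_left (by linarith [hx j]) (hc j).le
      _ = c j * x j * Real.log M + c j * y j := by ring
  calc wKL c x y ≤ ∑ j, (c j * x j * Real.log M + c j * y j) :=
        Finset.sum_le_sum fun j _ => term_le j
    _ = (∑ j, c j * x j) * Real.log M + ∑ j, c j * y j := by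
        rw [Finset.sum_add_distrib, Finset.sum_mul]
    _ ≤ β * Real.log M + β :=
        add_le_add (mul_le_mul_of_nonneg_right hcx (Real.log_nonneg hM)) hcy
    _ = β * (Real.log M + 1) := by ring

/-- If every `κ u` lies in `(0, β]`, then `log (∑ κ u / β)` is at most the log of the number of
summands. -/
theorem log_sum_div_le_log_card {V : Type*} {U : Finset V} (hU : U.Nonempty) {β : ℝ} (hβ : 0 < β)
    {κ : V → ℝ} (hκ : ∀ u ∈ U, κ u ∈ Set.Ioc (0 : ℝ) β) :
    Real.log ((∑ u ∈ U, κ u) / β) ≤ Real.log U.card := by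
  refine Real.log_le_log (div_pos (Finset.sum_pos (fun u hu => (hκ u hu).1) hU) hβ) ?_
  rw [div_le_iff₀ hβ, ← nsmul_eq_mul]
  exact Finset.sum_le_card_nsmul _ _ _ fun u hu => (hκ u hu).2

/-- Bound on the initial potential: `KL_c(x* ‖ x⁰) ≤ β(log m + 1)`,
`β·log(∑_{u∈U} κ_u/β) ≤ β·log n`, and the combined bound
`2·KL_c(x* ‖ x⁰) + 2e·β·log(∑ κ_u/β) ≤ 2β(log m + 1) + 2e·β·log n`. -/
theorem stmt_4 (m : ℕ) (c : Fin m → ℝ) (hc : ∀ j, 0 < c j) (β : ℝ) (hβ : 0 < β)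
    (m' : ℕ) (hm' : m' = (Finset.univ.filter (fun j => c j ≤ β)).card) (hm'pos : 1 ≤ m')
    (x0 : Fin m → ℝ)
    (hx0 : ∀ j, x0 j = if c j ≤ β then β / (c j * m') else 0)
    (xstar : Fin m → ℝ) (hxstar_nonneg : ∀ j, 0 ≤ xstar j)
    (hxstar_cost : ∑ j, c j * xstar j ≤ β)
    (hxstar_supp : ∀ j, β < c j → xstar j = 0)
    {V : Type*} (U : Finset V) (hU : U.Nonempty) (n : ℕ) (hn : n = U.card)
    (κ : V → ℝ) (hκ : ∀ u ∈ U, κ u ∈ Set.Ioc (0 : ℝ) β) :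
    wKL c xstar x0 ≤ β * (Real.log m + 1) ∧
    β * Real.log ((∑ u ∈ U, κ u) / β) ≤ β * Real.log n ∧
    2 * wKL c xstar x0 + 2 * Real.exp 1 * β * Real.log ((∑ u ∈ U, κ u) / β) ≤
      2 * β * (Real.log m + 1) + 2 * Real.exp 1 * β * Real.log n := by
  have hm'R : (1 : ℝ) ≤ m' := by exact_mod_cast hm'pos
  have hm'0 : (0 : ℝ) < m' := by linarith
  have hm'm : (m' : ℝ) ≤ m := by
    have h : m' ≤ m := by simpa [hm'] using Finset.card_filter_le Finset.univ (fun j => c j ≤ β)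
    exact_mod_cast h
  have hcost_x0 : ∑ j, c j * x0 j = β := by
    have hterm : ∀ j, c j * x0 j = if c j ≤ β then β / m' else 0 := by
      intro j
      have := (hc j).ne'
      rw [hx0 j]
      split_ifs
      · field_simp
      · simp
    rw [Finset.sum_congr rfl fun j _ => hterm j, ← Finset.sum_filter, Finset.sum_const, ← hm',
      nsmul_eq_mul, mul_div_cancel₀ _ hm'0.ne']
  have hKL : wKL c xstar x0 ≤ β * (Real.log m + 1) := by
    refine wKL_le_of_ratio_le hc hxstar_nonneg (hm'R.trans hm'm) (fun j hj => ?_) hxstar_cost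
      hcost_x0.le
    have hcj : c j ≤ β := not_lt.mp fun h => hj.ne' (hxstar_supp j h)
    have hx0j : x0 j = β / (c j * m') := by rw [hx0 j, if_pos hcj]
    have hpos : 0 < x0 j := hx0j ▸ div_pos hβ (mul_pos (hc j) hm'0)
    have hcost : c j * xstar j ≤ β :=
      (Finset.single_le_sum (f := fun i => c i * xstar i)
        (fun i _ => mul_nonneg (hc i).le (hxstar_nonneg i)) (Finset.mem_univ j)).trans hxstar_cost
    refine ⟨hpos, le_trans ?_ hm'm⟩
    have hmul : (m' : ℝ) * x0 j = β / c j := by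
      have := (hc j).ne'
      rw [hx0j]
      field_simp
    rw [div_le_iff₀ hpos, hmul, le_div_iff₀ (hc j), mul_comm]
    exact hcost
  have hlog : β * Real.log ((∑ u ∈ U, κ u) / β) ≤ β * Real.log n :=
    hn ▸ mul_le_mul_of_nonneg_left (log_sum_div_le_log_card hU hβ hκ) hβ.le
  refine ⟨hKL, hlog, ?_⟩
  have hexp := mul_le_mul_of_nonneg_left hlog (by positivity : (0 : ℝ) ≤ 2 * Real.exp 1)
  linarith
end

section
/- Let 𝒮 be a finite collection of m sets over a ground set, each set S having a cost c_S > 0, and let β > 0. Let x ∈ ℝ^𝒮_{≥0} satisfy ⟨c, x⟩ = β. Let v be an element contained in at least one set of 𝒮, let κ_v := min{c_S : S ∋ v}, and suppose X_v := Σ_{S ∋ v} x_S < 1. Define x' by x'_S := x_S·exp(𝟙[S ∋ v]·κ_v/c_S)/Z, where Z := (1/β)·Σ_S c_S·x_S·exp(𝟙[S ∋ v]·κ_v/c_S). Then for every x* ∈ ℝ^𝒮_{≥0} with ⟨c, x*⟩ ≤ β, Σ_{S ∋ v} x*_S ≥ 1, and x*_S = 0 whenever x_S = 0, it holds that KL_c(x*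 ‖ x') − KL_c(x* ‖ x) ≤ (e−1)·κ_v·X_v − κ_v. -/
open Finset Real
open scoped Classical

/-- On `[0, 1]` the exponential lies below its chord. -/
theorem exp_sub_one_le_chord {t : ℝ} (h0 : 0 ≤ t) (h1 : t ≤ 1) :
    Real.exp t - 1 ≤ (Real.exp 1 - 1) * t := by
  have h := convexOn_exp.2 (Set.mem_univ 0) (Set.mem_univ 1) (sub_nonneg.2 h1) h0
    (sub_add_cancel 1 t)
  simp only [smul_eq_mul, mul_zero, mul_one, zero_add, Real.exp_zero] at h
  linarith

/-- Change of one summand of the KL divergence when `y` is replaced by `y * exp a / Z`. -/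
theorem mul_log_div_update {p y a Z : ℝ} (hZ : 0 < Z) (hsupp : y = 0 → p = 0) :
    p * Real.log (p / (y * Real.exp a / Z)) = p * Real.log (p / y) + p * (Real.log Z - a) := by
  rcases eq_or_ne p 0 with rfl | hp
  · simp
  · have hy : y ≠ 0 := fun h => hp (hsupp h)
    have he : p / (y * Real.exp a / Z) = p / y * (Z / Real.exp a) := by
      field_simp
    rw [he, Real.log_mul (div_ne_zero hp hy) (by positivity),
      Real.log_div hZ.ne' (Real.exp_ne_zero a), Real.log_exp]
    ring

/-- Change of the weighted KL divergence under a multiplicative update. -/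
theorem wKL_update_sub {m : ℕ} (c p y a : Fin m → ℝ) {Z : ℝ} (hZ : 0 < Z)
    (hsupp : ∀ S, y S = 0 → p S = 0) :
    wKL c p (fun S => y S * Real.exp (a S) / Z) - wKL c p y =
      Real.log Z * ∑ S, c S * p S - ∑ S, c S * a S * p S
        + ((∑ S, c S * y S * Real.exp (a S)) / Z - ∑ S, c S * y S) := by
  simp only [wKL, mul_log_div_update hZ (hsupp _), Finset.mul_sum, Finset.sum_div,
    ← Finset.sum_sub_distrib, ← Finset.sum_add_distrib]
  exact Finset.sum_congr rfl fun S _ => by ring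

/-- Change in KL under the multiplicative-weights update of `LearnOrCover` upon arrival of
an uncovered element `v` with `X_v = ∑_{S ∋ v} x_S < 1`:
`KL_c(x* ‖ x') − KL_c(x* ‖ x) ≤ (e−1)·κ_v·X_v − κ_v`. -/
theorem stmt_5 {V : Type*} (m : ℕ) (Sets : Fin m → Set V) (c : Fin m → ℝ)
    (hc : ∀ S, 0 < c S) (β : ℝ) (hβ : 0 < β)
    (x : Fin m → ℝ) (hx_nonneg : ∀ S, 0 ≤ x S) (hx_cost : ∑ S, c S * x S = β)
    (v : V) (hv : ∃ S, v ∈ Sets S)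
    (κv : ℝ) (hκv : IsLeast {r : ℝ | ∃ S, v ∈ Sets S ∧ c S = r} κv)
    (Xv : ℝ) (hXv : Xv = ∑ S, if v ∈ Sets S then x S else 0) (hXv1 : Xv < 1)
    (Z : ℝ) (hZ : Z = (1 / β) * ∑ S, c S * x S * Real.exp (if v ∈ Sets S then κv / c S else 0))
    (x' : Fin m → ℝ)
    (hx' : ∀ S, x' S = x S * Real.exp (if v ∈ Sets S then κv / c S else 0) / Z)
    (xstar : Fin m → ℝ) (hxstar_nonneg : ∀ S, 0 ≤ xstar S)
    (hxstar_cost : ∑ S, c S * xstar S ≤ β)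
    (hxstar_cover : 1 ≤ ∑ S, if v ∈ Sets S then xstar S else 0)
    (hxstar_supp : ∀ S, x S = 0 → xstar S = 0) :
    wKL c xstar x' - wKL c xstar x ≤ (Real.exp 1 - 1) * κv * Xv - κv := by
  obtain ⟨⟨S₀, -, hS₀⟩, hmin⟩ := hκv
  have hκ : 0 < κv := hS₀ ▸ hc S₀
  obtain rfl : x' = fun S => x S * Real.exp (if v ∈ Sets S then κv / c S else 0) / Z := funext hx'
  set a : Fin m → ℝ := fun S => if v ∈ Sets S then κv / c S else 0 with ha
  have ha0 : ∀ S, 0 ≤ a S := fun S => by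
    have := hc S
    simp only [ha]
    split_ifs <;> positivity
  have ha1 : ∀ S, a S ≤ 1 := fun S => by
    simp only [ha]
    split_ifs with h
    · exact (div_le_one (hc S)).2 (hmin ⟨S, h, rfl⟩)
    · exact zero_le_one
  have hca : ∀ (y : Fin m → ℝ),
      ∑ S, c S * a S * y S = κv * ∑ S, if v ∈ Sets S then y S else 0 := fun y => by
    rw [Finset.mul_sum]
    refine Finset.sum_congr rfl fun S _ => ?_
    have := (hc S).ne'
    simp only [ha]
    split_ifs
    · field_simp
    · simp
  have hβZ : ∑ S, c S * x S * Real.exp (a S) = β * Z := by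
    rw [hZ, one_div, mul_inv_cancel_left₀ hβ.ne']
  have hZ1 : 1 ≤ Z := by
    refine le_of_mul_le_mul_left ?_ hβ
    rw [mul_one, ← hβZ, ← hx_cost]
    exact Finset.sum_le_sum fun S _ => le_mul_of_one_le_right
      (mul_nonneg (hc S).le (hx_nonneg S)) (Real.one_le_exp (ha0 S))
  have hZ0 : 0 < Z := zero_lt_one.trans_le hZ1
  have hgrowth : β * (Z - 1) ≤ (Real.exp 1 - 1) * κv * Xv := by
    rw [hXv, mul_assoc, ← hca x, mul_sub, mul_one, ← hβZ, ← hx_cost, ← Finset.sum_sub_distrib,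
      Finset.mul_sum]
    refine Finset.sum_le_sum fun S _ => ?_
    linarith [mul_le_mul_of_nonneg_left (exp_sub_one_le_chord (ha0 S) (ha1 S))
      (mul_nonneg (hc S).le (hx_nonneg S))]
  have hlog : Real.log Z * ∑ S, c S * xstar S ≤ β * (Z - 1) := by
    rw [mul_comm β]
    exact (mul_le_mul_of_nonneg_left hxstar_cost (Real.log_nonneg hZ1)).trans
      (mul_le_mul_of_nonneg_right (Real.log_le_sub_one_of_pos hZ0) hβ.le)
  have hcover : κv ≤ κv * ∑ S, if v ∈ Sets S then xstar S else 0 :=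
    le_mul_of_one_le_right hκ.le hxstar_cover
  have hdiff := wKL_update_sub c xstar x a hZ0 hxstar_supp
  rw [hβZ, hx_cost, mul_div_cancel_right₀ _ hZ0.ne', hca xstar] at hdiff
  linarith
end

section
/- For every finite list of nonnegative reals q_1, …, q_k, it holds that 1 − ∏_{j=1}^k (1 − min(q_j, 1)) ≥ (1 − e^{−1})·min(Σ_{j=1}^k q_j, 1). -/
open Finset

/-- On `[0, 1]` the function `exp (-x)` lies below its chord. -/
lemma exp_neg_le_chord {x : ℝ} (hx₀ : 0 ≤ x) (hx₁ : x ≤ 1) :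
    Real.exp (-x) ≤ 1 - (1 - (Real.exp 1)⁻¹) * x := by
  have h := convexOn_exp.2 (Set.mem_univ 0) (Set.mem_univ (-1)) (sub_nonneg.2 hx₁) hx₀
    (sub_add_cancel 1 x)
  simp only [smul_eq_mul, mul_zero, zero_add, mul_neg, mul_one, Real.exp_zero,
    Real.exp_neg 1] at h
  linarith

lemma one_sub_min_one_le_exp_neg (x : ℝ) : 1 - min x 1 ≤ Real.exp (-x) := by
  rcases le_total x 1 with h | h
  · rw [min_eq_left h]
    exact Real.one_sub_le_exp_neg x
  · rw [min_eq_right h, sub_self]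
    exact (Real.exp_pos _).le

/-- For nonnegative reals `q₁, …, q_k`:
`1 − ∏ⱼ (1 − min(qⱼ,1)) ≥ (1 − e⁻¹)·min(∑ⱼ qⱼ, 1)`. -/
theorem stmt_6 (k : ℕ) (q : Fin k → ℝ) (hq : ∀ j, 0 ≤ q j) :
    1 - ∏ j, (1 - min (q j) 1) ≥ (1 - (Real.exp 1)⁻¹) * min (∑ j, q j) 1 := by
  have hprod : ∏ j, (1 - min (q j) 1) ≤ Real.exp (-∑ j, q j) := by
    rw [← Finset.sum_neg_distrib, Real.exp_sum]
    exact Finset.prod_le_prod (fun j _ => sub_nonneg.2 (min_le_right _ _))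
      fun j _ => one_sub_min_one_le_exp_neg (q j)
  have hmono : Real.exp (-∑ j, q j) ≤ Real.exp (-min (∑ j, q j) 1) :=
    Real.exp_le_exp.2 (neg_le_neg (min_le_left _ _))
  have hchord := exp_neg_le_chord
    (le_min (Finset.sum_nonneg fun j _ => hq j) zero_le_one) (min_le_right (∑ j, q j) 1)
  linarith
end

section
/- Let H_n := Σ_{i=1}^n 1/i denote the n-th harmonic number, with H_0 := 0. Let (C_N)_{N ≥ 0} be a sequence of reals with C_0 = 0 and, for every N ≥ 1, C_N = 1 + (1/N)·Σ_{n=0}^{N−1} (H_N − H_n)·C_n. Then C_N ≥ H_N/2 for every N ≥ 1. -/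
open Finset

lemma sum_range_of_sub_eq_inv (H : ℕ → ℝ)
    (hs : ∀ n : ℕ, H (n + 1) = H n + 1 / ((n : ℝ) + 1)) (N : ℕ) :
    ∑ n ∈ range N, H n = N * H N - N := by
  induction N with
  | zero => simp
  | succ k ih =>
    have : (k : ℝ) + 1 ≠ 0 := by positivity
    rw [sum_range_succ, ih, hs]
    push_cast
    field_simp
    ring

lemma sum_range_sq_of_sub_eq_inv (H : ℕ → ℝ) (h0 : H 0 = 0)
    (hs : ∀ n : ℕ, H (n + 1) = H n + 1 / ((n : ℝ) + 1)) (N : ℕ) :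
    ∑ n ∈ range N, H n ^ 2 = N * H N ^ 2 - (2 * N + 1) * H N + 2 * N := by
  induction N with
  | zero => simp [h0]
  | succ k ih =>
    have : (k : ℝ) + 1 ≠ 0 := by positivity
    rw [sum_range_succ, ih, hs]
    push_cast
    field_simp
    ring

/-- If `C 0 = 0` and `C N = 1 + (1/N)·∑_{n=0}^{N−1} (H_N − H_n)·C n` for all `N ≥ 1`,
where `H` is the harmonic number sequence (`H 0 = 0`), then `C N ≥ H N / 2` for `N ≥ 1`. -/
theorem stmt_12 (H : ℕ → ℝ) (hH : ∀ n, H n = ∑ i ∈ Finset.range n, (1 : ℝ) / (i + 1))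
    (C : ℕ → ℝ) (hC0 : C 0 = 0)
    (hC : ∀ N : ℕ, 1 ≤ N →
      C N = 1 + (1 / (N : ℝ)) * ∑ n ∈ Finset.range N, (H N - H n) * C n) :
    ∀ N : ℕ, 1 ≤ N → C N ≥ H N / 2 := by
  have h0 : H 0 = 0 := by simp [hH]
  have hs (n : ℕ) : H (n + 1) = H n + 1 / ((n : ℝ) + 1) := by
    rw [hH, hH, sum_range_succ]
  have hmono : Monotone H := monotone_nat_of_le_succ fun n => by
    rw [hs]
    exact le_add_of_nonneg_right (by positivity)
  suffices h : ∀ N, H N / 2 ≤ C N from fun N _ => h N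
  intro N
  induction N using Nat.strong_induction_on with
  | _ N ih =>
    rcases Nat.eq_zero_or_pos N with rfl | hN
    · simp [h0, hC0]
    have hN' : (0 : ℝ) < N := by exact_mod_cast hN
    have hnonneg : 0 ≤ H N := h0 ▸ hmono (Nat.zero_le N)
    have hle : ∑ n ∈ range N, (H N - H n) * (H n / 2) ≤
        ∑ n ∈ range N, (H N - H n) * C n :=
      sum_le_sum fun n hn => mul_le_mul_of_nonneg_left (ih n (mem_range.1 hn))
        (sub_nonneg.2 (hmono (mem_range.1 hn).le))
    have hsum : ∑ n ∈ range N, (H N - H n) * (H n / 2) = ((N + 1) * H N - 2 * N) / 2 := by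
      have : ∀ n ∈ range N, (H N - H n) * (H n / 2) = H N / 2 * H n - 1 / 2 * H n ^ 2 :=
        fun n _ => by ring
      rw [sum_congr rfl this, sum_sub_distrib, ← mul_sum, ← mul_sum,
        sum_range_of_sub_eq_inv H hs, sum_range_sq_of_sub_eq_inv H h0 hs]
      ring
    rw [hsum] at hle
    calc H N / 2 ≤ H N / 2 + H N / (2 * N) := le_add_of_nonneg_right (by positivity)
      _ = 1 + 1 / (N : ℝ) * (((N + 1) * H N - 2 * N) / 2) := by field_simp; ring
      _ ≤ 1 + 1 / (N : ℝ) * ∑ n ∈ range N, (H N - H n) * C n := by gcongr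
      _ = C N := (hC N hN).symm
end
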